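/- Let (A, 𝔪) be a finite local Gorenstein k-algebra and let π : A → k be a k-linear map whose restriction to the socle soc(A) is nonzero. Then the bilinear form A × A → k given by (a, b) ↦ π(a·b) is a perfect (nondegenerate) pairing: for every nonzero a ∈ A there exists b ∈ A with π(a·b) ≠ 0. -/

import Mathlib

/-!
When the maximal ideal `𝔪` is nilpotent the socle is essential: multiplying a nonzero ideal by `𝔪`
until just before it vanishes leaves a nonzero ideal contained in the socle. A linear map that is
injective on the socle therefore vanishes on no nonzero ideal, in particular on no ideal `A a` with
`a ≠ 0`. On a one-dimensional socle injective just means nonzero.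
-/

open Submodule in
theorem eq_bot_of_disjoint_torsionBySet {A M : Type*} [CommSemiring A] [AddCommMonoid M]
    [Module A M] {I : Ideal A} (hI : IsNilpotent I) {N : Submodule A M}
    (hN : Disjoint N (torsionBySet A M I)) : N = ⊥ := by
  obtain ⟨n, hn⟩ := hI
  have hpow : I ^ n • N = ⊥ := by rw [hn, zero_eq_bot, bot_smul]
  clear hn
  induction n with
  | zero => rwa [pow_zero, Ideal.one_eq_top, top_smul] at hpow
  | succ n ih =>
    have pow_smul_le : I ^ n • N ≤ torsionBySet A M I := fun x hx ↦
      (mem_torsionBySet_iff _ _).2 fun b ↦ by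
        rw [← mem_bot A, ← hpow, pow_succ', mul_smul]
        exact smul_mem_smul b.2 hx
    exact ih (le_bot_iff.1 (hN smul_le_right pow_smul_le))

section RestrictScalars

variable {k A M V : Type*} [CommSemiring k] [CommSemiring A] [Algebra k A]
  [AddCommMonoid M] [Module k M] [Module A M] [IsScalarTower k A M] [AddCommMonoid V] [Module k V]
  {I : Ideal A} {f : M →ₗ[k] V}

theorem eq_bot_of_restrictScalars_le_ker (hI : IsNilpotent I)
    (hf : Disjoint ((Submodule.torsionBySet A M I).restrictScalars k) (LinearMap.ker f))
    {N : Submodule A M} (hN : N.restrictScalars k ≤ LinearMap.ker f) : N = ⊥ := by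
  refine eq_bot_of_disjoint_torsionBySet hI (Submodule.disjoint_def.2 fun x hxN hx ↦ ?_)
  exact Submodule.disjoint_def.1 hf x hx (hN hxN)

theorem exists_map_smul_ne_zero (hI : IsNilpotent I)
    (hf : Disjoint ((Submodule.torsionBySet A M I).restrictScalars k) (LinearMap.ker f))
    {m : M} (hm : m ≠ 0) : ∃ b : A, f (b • m) ≠ 0 := by
  by_contra! h
  refine hm (Submodule.span_singleton_eq_bot.1 (eq_bot_of_restrictScalars_le_ker hI hf ?_))
  intro x hx
  obtain ⟨b, rfl⟩ := Submodule.mem_span_singleton.1 hx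
  exact h b

end RestrictScalars

theorem disjoint_ker_of_finrank_eq_one {k W V : Type*} [DivisionRing k] [AddCommGroup W]
    [Module k W] [AddCommGroup V] [Module k V] {S : Submodule k W} (hS : Module.finrank k S = 1)
    {f : W →ₗ[k] V} {s : W} (hs : s ∈ S) (hfs : f s ≠ 0) : Disjoint S (LinearMap.ker f) :=
  (Submodule.isAtom_iff_finrank_eq_one.2 hS).not_le_iff_disjoint.1 fun h ↦ hfs (h hs)

theorem deformations_stmt10_general {k A V : Type*} [Field k] [CommRing A] [Algebra k A]
    [IsLocalRing A] [AddCommGroup V] [Module k V]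
    (hnil : IsNilpotent (IsLocalRing.maximalIdeal A))
    (hsoc : Module.finrank k
      ↥((Submodule.torsionBySet A A
          ((IsLocalRing.maximalIdeal A : Ideal A) : Set A)).restrictScalars k) = 1)
    (π : A →ₗ[k] V)
    (hπ : ∃ a : A, (∀ b ∈ IsLocalRing.maximalIdeal A, b * a = 0) ∧ π a ≠ 0) :
    ∀ a : A, a ≠ 0 → ∃ b : A, π (a * b) ≠ 0 := by
  intro a ha
  obtain ⟨s, hs, hπs⟩ := hπ
  have hs_mem : s ∈ Submodule.torsionBySet A A (IsLocalRing.maximalIdeal A : Set A) :=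
    (Submodule.mem_torsionBySet_iff _ _).2 fun b ↦ hs b b.2
  simpa only [smul_eq_mul, mul_comm a] using
    exists_map_smul_ne_zero hnil (disjoint_ker_of_finrank_eq_one hsoc hs_mem hπs) ha

/-- Let `(A, 𝔪)` be a finite local Gorenstein `k`-algebra and
`π : A → k` a `k`-linear map whose restriction to the socle `soc(A)` is nonzero. Then the
bilinear form `(a, b) ↦ π(a·b)` is a perfect pairing: for every nonzero `a ∈ A` there
exists `b ∈ A` with `π(a·b) ≠ 0`. -/
theorem deformations_stmt10 {k A : Type*} [Field k]
    [CommRing A] [Algebra k A] [IsLocalRing A] [FiniteDimensional k A]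
    -- the residue field A/𝔪 is k
    (hres : Function.Bijective (algebraMap k (IsLocalRing.ResidueField A)))
    -- the socle soc(A) = {a : a·𝔪 = 0} has k-dimension 1 (A is Gorenstein)
    (hsoc : Module.finrank k
      ↥((Submodule.torsionBySet A A
          ((IsLocalRing.maximalIdeal A : Ideal A) : Set A)).restrictScalars k) = 1)
    (π : A →ₗ[k] k)
    -- the restriction of π to the socle is nonzero
    (hπ : ∃ a : A, (∀ b ∈ IsLocalRing.maximalIdeal A, b * a = 0) ∧ π a ≠ 0) :
    ∀ a : A, a ≠ 0 → ∃ b : A, π (a * b) ≠ 0 := by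
  have : IsArtinianRing A := IsArtinianRing.of_finite k A
  exact deformations_stmt10_general
    ((isArtinianRing_iff_isNilpotent_maximalIdeal A).1 inferInstance) hsoc π hπ
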